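/- Let I be a finite set of intersections, and for each i ∈ I let the neighborhood control vector be x_i = M_i z, where z = ((z)_1, …, (z)_{|I|}) is the concatenation of per-intersection blocks (z)_j ∈ ℝ^{K_j} and M_i selects the blocks of intersections in N_i ∪ {i}. For dual vectors λ_i (with block components (λ_i)_j) and iterates x_i^{k+1} (with block components (x_i^{k+1})_j), and any z whose blocks are one-hot, i.e., (z)_j ∈ {0,1}^{K_j} with exactly one entry equal to 1 for each j, the objective Σ_{i∈I} ( λ_i^⊤ M_i z − (ρ/2) ‖x_i^{k+1} − M_i z‖₂² ) equals Σ_{j∈I} ( Σ_{i : j ∈ N_i ∪ {i}} ((λ_i)_j + ρ (x_i^{k+1})_j) )^⊤ (z)_j + C, where C is a constant independent of z. Consequently the objective decomposes into a sum of functions each depending on a single block (z)_j. -/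

import Mathlib

open Finset

/-- ADMM z-update decomposition: for one-hot block variables `z`, the augmented
Lagrangian objective `Σ_i (λ_i^⊤ M_i z − (ρ/2) ‖x_i − M_i z‖²)` equals
`Σ_j (Σ_{i : j ∈ N_i ∪ {i}} ((λ_i)_j + ρ (x_i)_j))^⊤ (z)_j + C` for a constant `C`
independent of `z`; hence the objective decomposes blockwise. -/
theorem admm_z_update_decomposition
    {I : Type*} [Fintype I] [DecidableEq I] (K : I → ℕ)
    (N : I → Finset I)
    (lam x : I → ∀ j : I, Fin (K j) → ℝ) (ρ : ℝ) :
    ∃ C : ℝ, ∀ z : ∀ j : I, Fin (K j) → ℝ,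
      (∀ j : I, (∀ k, z j k = 0 ∨ z j k = 1) ∧ ∑ k, z j k = 1) →
      ∑ i : I,
        ((∑ j ∈ insert i (N i), ∑ k, lam i j k * z j k)
          - (ρ / 2) * ∑ j ∈ insert i (N i), ∑ k, (x i j k - z j k) ^ 2)
      = (∑ j : I, ∑ k,
          (∑ i ∈ Finset.univ.filter (fun i : I => j ∈ insert i (N i)),
            (lam i j k + ρ * x i j k)) * z j k) + C := by
  refine ⟨∑ i : I, ∑ j ∈ insert i (N i), (-(ρ / 2) * ((∑ k, x i j k ^ 2) + 1)), ?_⟩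
  intro z hz
  have h1 : (∑ j : I, ∑ k,
          (∑ i ∈ Finset.univ.filter (fun i : I => j ∈ insert i (N i)),
            (lam i j k + ρ * x i j k)) * z j k)
      = ∑ i : I, ∑ j ∈ insert i (N i), ∑ k, (lam i j k + ρ * x i j k) * z j k := by
    have h2 : ∀ j : I, (∑ k,
          (∑ i ∈ Finset.univ.filter (fun i : I => j ∈ insert i (N i)),
            (lam i j k + ρ * x i j k)) * z j k)
        = ∑ i ∈ Finset.univ.filter (fun i : I => j ∈ insert i (N i)),
            ∑ k, (lam i j k + ρ * x i j k) * z j k := by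
      intro j
      simp_rw [Finset.sum_mul]
      exact Finset.sum_comm
    rw [Finset.sum_congr rfl (fun j _ => h2 j)]
    apply Finset.sum_comm'
    intro a b
    simp
  rw [h1, ← Finset.sum_add_distrib]
  refine Finset.sum_congr rfl fun i _ => ?_
  rw [Finset.mul_sum, ← Finset.sum_sub_distrib, ← Finset.sum_add_distrib]
  refine Finset.sum_congr rfl fun j _ => ?_
  rw [← (hz j).2, ← Finset.sum_add_distrib, Finset.mul_sum, Finset.mul_sum,
    ← Finset.sum_sub_distrib, ← Finset.sum_add_distrib]
  refine Finset.sum_congr rfl fun k _ => ?_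
  rcases (hz j).1 k with h | h <;> rw [h] <;> ring
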